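/- (Integration-by-parts identity underlying Proposition 3.7.) Let φ(y) = (2π)^{−1/2} e^{−y²/2} be the standard normal density. Let g : ℝ → ℝ be bounded and measurable, and let X : ℝ × ℝ → ℝ, (y,z) ↦ X(y,z), be twice continuously differentiable with ∂_y X(y,z) ≥ ε for some ε > 0 and all (y,z). Assume there exist constants C ≥ 0 and m ∈ ℕ such that for all (y,z): |∂_z X(y,z)| ≤ C(1+|y|)^m, |∂²_{yz} X(y,z)| ≤ C(1+|y|)^m, and |∂²_{yy} X(y,z)| ≤ C(1+|y|)^m. Then the function h(z) = ∫_ℝ g(X(y,z)) φ(y) dy is differentiable on ℝ, and for every z, h'(z) = −∫_ℝ g(X(y,z)) · ∂/∂y [ (∂_z X(y,z) / ∂_y X(y,z)) · φ(y) ] dy. In particular, h is smooth even when g is not continuous. -/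

import Mathlib

open MeasureTheory

/-- The standard normal density φ(y) = (2π)^{-1/2} exp(-y²/2). -/
noncomputable def stdGaussPDF (y : ℝ) : ℝ :=
  (Real.sqrt (2 * Real.pi))⁻¹ * Real.exp (-y^2/2)

open Filter Topology Set
open scoped Convolution

theorem integrable_one_add_abs_pow_mul_stdGaussPDF (N : ℕ) :
    Integrable fun y : ℝ => (1 + |y|) ^ N * stdGaussPDF y := by
  have hexp : ∀ y : ℝ, -(1 / 2 : ℝ) * y ^ 2 = -y ^ 2 / 2 := fun y => by ring
  have h0 : Integrable fun y : ℝ => Real.exp (-y ^ 2 / 2) := by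
    simpa only [hexp] using integrable_exp_neg_mul_sq (b := 1 / 2) (by norm_num)
  have hN : Integrable fun y : ℝ => |y| ^ N * Real.exp (-y ^ 2 / 2) := by
    have h := (integrable_rpow_mul_exp_neg_mul_sq (b := 1 / 2) (by norm_num) (s := N)
      (by linarith [N.cast_nonneg (α := ℝ)])).norm
    simpa only [Real.rpow_natCast, norm_mul, norm_pow, Real.norm_eq_abs, Real.abs_exp, hexp]
      using h
  have hdom : Integrable fun y : ℝ => (Real.sqrt (2 * Real.pi))⁻¹ * (2 ^ (N - 1) *
      (Real.exp (-y ^ 2 / 2) + |y| ^ N * Real.exp (-y ^ 2 / 2))) :=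
    ((h0.add hN).const_mul _).const_mul _
  refine hdom.mono' (by unfold stdGaussPDF; fun_prop) (ae_of_all _ fun y => ?_)
  have hpow := add_pow_le zero_le_one (abs_nonneg y) N
  rw [one_pow] at hpow
  have hs : 0 ≤ (Real.sqrt (2 * Real.pi))⁻¹ := by positivity
  rw [stdGaussPDF, Real.norm_of_nonneg (by positivity)]
  calc (1 + |y|) ^ N * ((Real.sqrt (2 * Real.pi))⁻¹ * Real.exp (-y ^ 2 / 2))
      = (Real.sqrt (2 * Real.pi))⁻¹ * ((1 + |y|) ^ N * Real.exp (-y ^ 2 / 2)) := by ring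
    _ ≤ (Real.sqrt (2 * Real.pi))⁻¹ *
        ((2 ^ (N - 1) * (1 + |y| ^ N)) * Real.exp (-y ^ 2 / 2)) := by gcongr
    _ = _ := by ring

theorem stdGaussPDF_nonneg (y : ℝ) : 0 ≤ stdGaussPDF y := by
  unfold stdGaussPDF; positivity

theorem continuous_stdGaussPDF : Continuous stdGaussPDF := by
  unfold stdGaussPDF; fun_prop

theorem hasDerivAt_stdGaussPDF (y : ℝ) : HasDerivAt stdGaussPDF (-y * stdGaussPDF y) y := by
  have h : HasDerivAt (fun x : ℝ => -x ^ 2 / 2) (-y) y := by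
    exact ((hasDerivAt_pow 2 y).neg.div_const 2).congr_deriv (by ring)
  exact (h.exp.const_mul (Real.sqrt (2 * Real.pi))⁻¹).congr_deriv (by rw [stdGaussPDF]; ring)

theorem abs_convolution_le {f g : ℝ → ℝ} {c : ℝ} (hf : Integrable f) (hg : ∀ x, |g x| ≤ c)
    (x : ℝ) : |(f ⋆[ContinuousLinearMap.lsmul ℝ ℝ, volume] g) x| ≤ (∫ t, |f t|) * c := by
  rw [convolution_lsmul, ← Real.norm_eq_abs, ← integral_mul_const]
  refine norm_integral_le_of_norm_le (hf.abs.mul_const c) (ae_of_all _ fun t => ?_)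
  rw [norm_smul]
  exact mul_le_mul_of_nonneg_left (hg _) (abs_nonneg _)

/-- A bounded measurable function is an almost everywhere limit of uniformly bounded differentiable
functions, each of which has a bounded derivative. -/
theorem exists_differentiable_tendsto_ae {g : ℝ → ℝ} (hg : Measurable g) {c : ℝ}
    (hgc : ∀ x, |g x| ≤ c) :
    ∃ G : ℕ → ℝ → ℝ, (∀ n, Differentiable ℝ (G n)) ∧ (∀ n x, |G n x| ≤ c) ∧
      (∀ n, ∃ D, ∀ x, |deriv (G n) x| ≤ D) ∧
      ∀ᵐ x, Tendsto (fun n => G n x) atTop (𝓝 (g x)) := by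
  have hloc : LocallyIntegrable g :=
    (locallyIntegrable_const c).mono hg.aestronglyMeasurable
      (ae_of_all _ fun x => (hgc x).trans (le_abs_self c))
  let ψ : ℕ → ContDiffBump (0 : ℝ) := fun n =>
    ⟨1 / ((n : ℝ) + 1), 2 * (1 / ((n : ℝ) + 1)), by positivity, by
      have : 0 < 1 / ((n : ℝ) + 1) := by positivity
      linarith⟩
  have hsmooth : ∀ n, ContDiff ℝ 1 ((ψ n).normed volume) := fun n => (ψ n).contDiff_normed
  have hd : ∀ n x, HasDerivAt
      ((ψ n).normed volume ⋆[ContinuousLinearMap.lsmul ℝ ℝ, volume] g)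
      ((deriv ((ψ n).normed volume) ⋆[ContinuousLinearMap.lsmul ℝ ℝ, volume] g) x) x :=
    fun n x => (ψ n).hasCompactSupport_normed.hasDerivAt_convolution_left _ (hsmooth n) hloc x
  refine ⟨fun n => (ψ n).normed volume ⋆[ContinuousLinearMap.lsmul ℝ ℝ, volume] g,
    fun n x => (hd n x).differentiableAt, fun n x => ?_, fun n => ?_, ?_⟩
  · refine (abs_convolution_le (ψ n).integrable_normed hgc x).trans_eq ?_
    simp_rw [abs_of_nonneg ((ψ n).nonneg_normed _), (ψ n).integral_normed, one_mul]
  · refine ⟨_, fun x => (hd n x).deriv ▸ abs_convolution_le ?_ hgc x⟩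
    exact ((hsmooth n).continuous_deriv le_rfl).integrable_of_hasCompactSupport
      (ψ n).hasCompactSupport_normed.deriv
  · refine ContDiffBump.ae_convolution_tendsto_right_of_locallyIntegrable (K := 2) ?_
      (Eventually.of_forall fun n => le_rfl) hloc
    simpa [ψ] using (tendsto_one_div_add_atTop_nhds_zero_nat (𝕜 := ℝ)).const_mul 2

/-- If a bounded sequence `f n` tends to zero almost everywhere and `∂_y X ≥ ε > 0`, then the
weighted integrals of `|f n (X(·, z))|` tend to zero, uniformly in `z` on compact sets. -/
theorem eventually_integral_abs_comp_mul_lt {f : ℕ → ℝ → ℝ} (hf : ∀ n, Measurable (f n)) {c : ℝ}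
    (hfc : ∀ n x, |f n x| ≤ c) (hlim : ∀ᵐ x, Tendsto (fun n => f n x) atTop (𝓝 0))
    {X X' : ℝ → ℝ → ℝ} (hX : Continuous fun q : ℝ × ℝ => X q.1 q.2)
    (hX' : ∀ y z, HasDerivAt (fun y' => X y' z) (X' y z) y) {ε : ℝ} (hε : 0 < ε)
    (hεX : ∀ y z, ε ≤ X' y z) {B : ℝ → ℝ} (hBc : Continuous B) (hBi : Integrable B)
    (hB0 : ∀ y, 0 ≤ B y) {K : Set ℝ} (hK : IsCompact K) {δ : ℝ} (hδ : 0 < δ) :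
    ∀ᶠ n in atTop, ∀ z ∈ K, ∫ y, |f n (X y z)| * B y < δ := by
  have hc : 0 ≤ c := (abs_nonneg _).trans (hfc 0 0)
  obtain ⟨L, hL⟩ : ∃ L : ℝ, ∫ y in (Icc (-L) L)ᶜ, B y < δ / (2 * (c + 1)) := by
    have h := (aecover_Icc (μ := volume) tendsto_neg_atTop_atBot
      tendsto_id).integral_tendsto_of_countably_generated hBi
    have h' := (tendsto_const_nhds (x := ∫ y, B y)).sub h
    rw [sub_self] at h'
    obtain ⟨L, hL⟩ := (h'.eventually_lt_const
      (show (0 : ℝ) < δ / (2 * (c + 1)) by positivity)).exists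
    refine ⟨L, ?_⟩
    rw [← integral_add_compl (measurableSet_Icc (a := -L) (b := L)) hBi] at hL
    simpa using hL
  obtain ⟨b, hb⟩ := isCompact_Icc.exists_bound_of_continuousOn (hBc.continuousOn (s := Icc (-L) L))
  obtain ⟨M, hM⟩ := (isCompact_Icc.prod hK).exists_bound_of_continuousOn
    (hX.continuousOn (s := Icc (-L) L ×ˢ K))
  have hf_int : ∀ n (s : Set ℝ), volume s ≠ ⊤ → IntegrableOn (fun x => |f n x|) s := by
    intro n s hs
    have : IsFiniteMeasure (volume.restrict s) := isFiniteMeasure_restrict.2 hs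
    exact (Integrable.of_bound (hf n).aestronglyMeasurable c (ae_of_all _ (hfc n))).abs
  have hI : Tendsto (fun n => ∫ x in Icc (-M) M, |f n x|) atTop (𝓝 0) := by
    have h := tendsto_integral_of_dominated_convergence (μ := volume.restrict (Icc (-M) M))
      (F := fun n x => |f n x|) (f := fun _ => 0) (fun _ => c)
      (fun n => (hf n).abs.aestronglyMeasurable) (integrableOn_const (by simp))
      (fun n => ae_of_all _ fun x => by simpa using hfc n x)
      (ae_restrict_of_ae (hlim.mono fun x hx => by simpa using hx.abs))
    simpa using h
  have hb0 : 0 ≤ |b| / ε := by positivity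
  filter_upwards [hI.eventually_lt_const (show (0 : ℝ) < δ / (2 * (|b| / ε + 1)) by positivity)]
    with n hn z hz
  have hXz : Continuous fun y => X y z := hX.comp (by fun_prop : Continuous fun y : ℝ => (y, z))
  have hint : Integrable fun y => |f n (X y z)| * B y :=
    hBi.bdd_mul ((hf n).comp hXz.measurable).abs.aestronglyMeasurable
      (ae_of_all _ fun y => by simpa using hfc n (X y z))
  have hinj : InjOn (fun y => X y z) (Icc (-L) L) := by
    refine (strictMono_of_deriv_pos fun y => ?_).injective.injOn
    rw [(hX' y z).deriv]
    exact hε.trans_le (hεX y z)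
  have hsub : (fun y => X y z) '' Icc (-L) L ⊆ Icc (-M) M := by
    rintro _ ⟨y, hy, rfl⟩
    exact abs_le.1 (hM (y, z) ⟨hy, hz⟩)
  have hder : ∀ y ∈ Icc (-L) L, HasDerivWithinAt (fun y => X y z) (X' y z) (Icc (-L) L) y :=
    fun y _ => (hX' y z).hasDerivWithinAt
  have hinn : ∫ y in Icc (-L) L, |f n (X y z)| * B y ≤
      |b| / ε * ∫ x in Icc (-M) M, |f n x| := by
    have hJ := (integrableOn_image_iff_integrableOn_abs_deriv_smul measurableSet_Icc hder hinj
      (fun x => |f n x|)).1 ((hf_int n _ (by simp)).mono_set hsub)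
    calc ∫ y in Icc (-L) L, |f n (X y z)| * B y
        ≤ ∫ y in Icc (-L) L, |b| / ε * (|X' y z| • |f n (X y z)|) := by
          refine setIntegral_mono_on hint.integrableOn (hJ.const_mul _) measurableSet_Icc
            fun y hy => ?_
          have h1 : B y ≤ |b| := (le_abs_self _).trans ((hb y hy).trans (le_abs_self b))
          have h2 : ε ≤ |X' y z| := (hεX y z).trans (le_abs_self _)
          calc |f n (X y z)| * B y ≤ |f n (X y z)| * (|b| / ε * |X' y z|) := by
                gcongr
                calc B y ≤ |b| / ε * ε := by rwa [div_mul_cancel₀ _ hε.ne']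
                  _ ≤ _ := by gcongr
            _ = _ := by rw [smul_eq_mul]; ring
      _ = |b| / ε * ∫ x in (fun y => X y z) '' Icc (-L) L, |f n x| := by
          rw [integral_const_mul,
            integral_image_eq_integral_abs_deriv_smul measurableSet_Icc hder hinj]
      _ ≤ _ := by
          gcongr
          · exact ae_of_all _ fun x => abs_nonneg _
          · exact hf_int n _ (by simp)
  have hout : ∫ y in (Icc (-L) L)ᶜ, |f n (X y z)| * B y ≤ c * ∫ y in (Icc (-L) L)ᶜ, B y := by
    rw [← integral_const_mul]
    exact integral_mono hint.integrableOn (hBi.integrableOn.const_mul c)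
      fun y => mul_le_mul_of_nonneg_right (hfc n _) (hB0 y)
  have hsmall : ∀ a t : ℝ, 0 ≤ a → t < δ / (2 * (a + 1)) → a * t < δ / 2 := by
    intro a t ha ht
    rw [lt_div_iff₀ (by positivity)] at ht
    nlinarith
  rw [← integral_add_compl (measurableSet_Icc (a := -L) (b := L)) hint]
  linarith [hsmall _ _ hc hL, hsmall _ _ hb0 hn]

theorem contDiff_deriv_fst {X : ℝ → ℝ → ℝ} (hX : ContDiff ℝ 2 fun q : ℝ × ℝ => X q.1 q.2) :
    ContDiff ℝ 1 fun q : ℝ × ℝ => deriv (fun y => X y q.2) q.1 := by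
  have h : (fun q : ℝ × ℝ => deriv (fun y => X y q.2) q.1) =
      fun q => fderiv ℝ (fun q : ℝ × ℝ => X q.1 q.2) q (1, 0) := by
    ext q
    have hd := ((hX.differentiable two_ne_zero) q).hasFDerivAt
    exact (hd.comp_hasDerivAt q.1 ((hasDerivAt_id q.1).prodMk (hasDerivAt_const q.1 q.2))).deriv
  rw [h]
  exact (hX.fderiv_right (by norm_num)).clm_apply contDiff_const

theorem contDiff_deriv_snd {X : ℝ → ℝ → ℝ} (hX : ContDiff ℝ 2 fun q : ℝ × ℝ => X q.1 q.2) :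
    ContDiff ℝ 1 fun q : ℝ × ℝ => deriv (fun z => X q.1 z) q.2 :=
  (contDiff_deriv_fst (X := fun z y => X y z) (hX.comp (contDiff_snd.prodMk contDiff_fst))).comp
    (contDiff_snd.prodMk contDiff_fst)

theorem abs_deriv_div_mul_stdGaussPDF_le {p q : ℝ → ℝ} (hp : Differentiable ℝ p)
    (hq : Differentiable ℝ q) {ε : ℝ} (hε : 0 < ε) (hεp : ∀ y, ε ≤ p y) {C : ℝ} (hC : 0 ≤ C)
    {m : ℕ} (hqC : ∀ y, |q y| ≤ C * (1 + |y|) ^ m) (hqC' : ∀ y, |deriv q y| ≤ C * (1 + |y|) ^ m)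
    (hpC' : ∀ y, |deriv p y| ≤ C * (1 + |y|) ^ m) (y : ℝ) :
    |deriv (fun y' => q y' / p y' * stdGaussPDF y') y| ≤
      (2 * C / ε + C ^ 2 / ε ^ 2) * ((1 + |y|) ^ (2 * m + 1) * stdGaussPDF y) := by
  have hp0 : ∀ y, 0 < p y := fun y => hε.trans_le (hεp y)
  have hφ := stdGaussPDF_nonneg y
  have hder : deriv (fun y' => q y' / p y' * stdGaussPDF y') y =
      (deriv q y / p y - q y * deriv p y / p y ^ 2 - y * (q y / p y)) * stdGaussPDF y := by
    have h := ((hq y).hasDerivAt.div (hp y).hasDerivAt (hp0 y).ne').mul (hasDerivAt_stdGaussPDF y)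
    refine (HasDerivAt.deriv h).trans ?_
    have := (hp0 y).ne'
    simp only [Pi.div_apply]
    field_simp
    ring
  have hdiv : ∀ a b : ℝ, |a| ≤ b → |a / p y| ≤ b / ε := fun a b hab => by
    rw [abs_div, abs_of_pos (hp0 y)]
    exact div_le_div₀ ((abs_nonneg a).trans hab) hab hε (hεp y)
  have h1 : (1 : ℝ) ≤ 1 + |y| := le_add_of_nonneg_right (abs_nonneg y)
  have ht : (1 + |y|) ^ m ≤ (1 + |y|) ^ (2 * m + 1) := pow_le_pow_right₀ h1 (by lia)
  have htt : (1 + |y|) ^ m * (1 + |y|) ^ m ≤ (1 + |y|) ^ (2 * m + 1) := by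
    rw [← pow_add]
    exact pow_le_pow_right₀ h1 (by lia)
  have hyt : |y| * (1 + |y|) ^ m ≤ (1 + |y|) ^ (2 * m + 1) :=
    calc |y| * (1 + |y|) ^ m ≤ (1 + |y|) * (1 + |y|) ^ m := by gcongr; linarith
      _ = (1 + |y|) ^ (m + 1) := (pow_succ' _ _).symm
      _ ≤ _ := pow_le_pow_right₀ h1 (by lia)
  have e1 : |deriv q y / p y| ≤ C / ε * (1 + |y|) ^ (2 * m + 1) :=
    (hdiv _ _ (hqC' y)).trans (by rw [mul_div_right_comm]; gcongr)
  have e2 : |q y * deriv p y / p y ^ 2| ≤ C ^ 2 / ε ^ 2 * (1 + |y|) ^ (2 * m + 1) := by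
    rw [sq, mul_div_mul_comm, abs_mul]
    calc |q y / p y| * |deriv p y / p y|
        ≤ C * (1 + |y|) ^ m / ε * (C * (1 + |y|) ^ m / ε) := by
          gcongr
          exacts [hdiv _ _ (hqC y), hdiv _ _ (hpC' y)]
      _ = C ^ 2 / ε ^ 2 * ((1 + |y|) ^ m * (1 + |y|) ^ m) := by field_simp
      _ ≤ _ := by gcongr
  have e3 : |y * (q y / p y)| ≤ C / ε * (1 + |y|) ^ (2 * m + 1) := by
    rw [abs_mul]
    calc |y| * |q y / p y| ≤ |y| * (C * (1 + |y|) ^ m / ε) := by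
          gcongr
          exact hdiv _ _ (hqC y)
      _ = C / ε * (|y| * (1 + |y|) ^ m) := by ring
      _ ≤ _ := by gcongr
  rw [hder, abs_mul, abs_of_nonneg hφ, ← mul_assoc]
  gcongr
  calc _ ≤ _ := (abs_sub _ _).trans (add_le_add_left (abs_sub _ _) _)
    _ ≤ C / ε * (1 + |y|) ^ (2 * m + 1) + C ^ 2 / ε ^ 2 * (1 + |y|) ^ (2 * m + 1) +
        C / ε * (1 + |y|) ^ (2 * m + 1) := by gcongr
    _ = _ := by ring

/-- The integration-by-parts formula for a differentiable observable with bounded derivative. -/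
theorem hasDerivAt_integral_comp_mul_stdGaussPDF {G : ℝ → ℝ} (hG : Differentiable ℝ G) {c D : ℝ}
    (hGc : ∀ x, |G x| ≤ c) (hGD : ∀ x, |deriv G x| ≤ D)
    {X : ℝ → ℝ → ℝ} (hX : ContDiff ℝ 2 fun q : ℝ × ℝ => X q.1 q.2)
    {ε : ℝ} (hε : 0 < ε) (hXy : ∀ y z, ε ≤ deriv (fun y' => X y' z) y) {C : ℝ} {m : ℕ}
    (hz : ∀ y z, |deriv (fun z' => X y z') z| ≤ C * (1 + |y|) ^ m) (z : ℝ)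
    (hw : Integrable fun y => deriv (fun y' =>
      (deriv (fun z' => X y' z') z / deriv (fun y'' => X y'' z) y') * stdGaussPDF y') y) :
    HasDerivAt (fun z => ∫ y : ℝ, G (X y z) * stdGaussPDF y)
      (-∫ y : ℝ, G (X y z) * deriv (fun y' =>
        (deriv (fun z' => X y' z') z / deriv (fun y'' => X y'' z) y') * stdGaussPDF y') y) z := by
  have hD : 0 ≤ D := (abs_nonneg _).trans (hGD 0)
  have hPi : ∀ z : ℝ, ContDiff ℝ 1 fun y : ℝ => (y, z) := contDiff_prodMk_left
  have hPi' : ∀ y : ℝ, ContDiff ℝ 1 fun z : ℝ => (y, z) := contDiff_prodMk_right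
  have hXd := hX.differentiable two_ne_zero
  have hXyd : ∀ y z, HasDerivAt (fun y' => X y' z) (deriv (fun y' => X y' z) y) y := fun y z =>
    (hXd.comp ((hPi z).differentiable one_ne_zero) y).hasDerivAt
  have hXzd : ∀ y z, HasDerivAt (fun z' => X y z') (deriv (fun z' => X y z') z) z := fun y z =>
    (hXd.comp ((hPi' y).differentiable one_ne_zero) z).hasDerivAt
  have hXc : ∀ z, Continuous fun y => X y z := fun z => hX.continuous.comp (hPi z).continuous
  have hPd : ContDiff ℝ 1 fun y => deriv (fun y' => X y' z) y :=
    (contDiff_deriv_fst hX).comp (hPi z)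
  have hQd : ContDiff ℝ 1 fun y => deriv (fun z' => X y z') z :=
    (contDiff_deriv_snd hX).comp (hPi z)
  have hP0 : ∀ y, deriv (fun y' => X y' z) y ≠ 0 := fun y => (hε.trans_le (hXy y z)).ne'
  have hφ : Integrable stdGaussPDF := by
    simpa using integrable_one_add_abs_pow_mul_stdGaussPDF 0
  have hφm := (integrable_one_add_abs_pow_mul_stdGaussPDF m).const_mul C
  have hGX : ∀ z, AEStronglyMeasurable (fun y => G (X y z)) volume := fun z =>
    (hG.continuous.comp (hXc z)).aestronglyMeasurable
  have hint : ∀ {u : ℝ → ℝ}, Integrable u → Integrable fun y => G (X y z) * u y := fun hu =>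
    hu.bdd_mul (hGX z) (ae_of_all _ fun y => hGc _)
  obtain ⟨hint', hder⟩ := hasDerivAt_integral_of_dominated_loc_of_deriv_le
    (F := fun z y => G (X y z) * stdGaussPDF y)
    (F' := fun z y => deriv G (X y z) * deriv (fun z' => X y z') z * stdGaussPDF y)
    (bound := fun y => D * (C * ((1 + |y|) ^ m * stdGaussPDF y)))
    (μ := volume) (x₀ := z) univ_mem
    (Eventually.of_forall fun z => (hGX z).mul continuous_stdGaussPDF.aestronglyMeasurable)
    (hint hφ)
    (((((measurable_deriv G).comp (hXc z).measurable).mul hQd.continuous.measurable).mul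
      continuous_stdGaussPDF.measurable).aestronglyMeasurable)
    (ae_of_all _ fun y z _ => by
      rw [norm_mul, norm_mul, Real.norm_eq_abs, Real.norm_eq_abs,
        Real.norm_of_nonneg (stdGaussPDF_nonneg y), ← mul_assoc C, ← mul_assoc D]
      have := stdGaussPDF_nonneg y
      gcongr
      exacts [hGD _, hz y z])
    (hφm.const_mul D)
    (ae_of_all _ fun y z _ => ((hG _).hasDerivAt.comp z (hXzd y z)).mul_const _)
  have hv : Differentiable ℝ fun y =>
      deriv (fun z' => X y z') z / deriv (fun y' => X y' z) y * stdGaussPDF y :=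
    ((hQd.differentiable one_ne_zero).div (hPd.differentiable one_ne_zero) hP0).mul
      fun y => (hasDerivAt_stdGaussPDF y).differentiableAt
  have hvi : Integrable fun y =>
      deriv (fun z' => X y z') z / deriv (fun y' => X y' z) y * stdGaussPDF y := by
    refine (hφm.div_const ε).mono' hv.continuous.aestronglyMeasurable (ae_of_all _ fun y => ?_)
    have := stdGaussPDF_nonneg y
    rw [norm_mul, Real.norm_of_nonneg this, norm_div, Real.norm_eq_abs,
      Real.norm_of_nonneg (hε.le.trans (hXy y z)), ← mul_assoc, mul_div_right_comm]
    gcongr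
    · exact (abs_nonneg _).trans (hz y z)
    · exact hz y z
    · exact hXy y z
  have hcancel : ∀ y, deriv G (X y z) * deriv (fun z' => X y z') z * stdGaussPDF y =
      deriv G (X y z) * deriv (fun y' => X y' z) y *
        (deriv (fun z' => X y z') z / deriv (fun y' => X y' z) y * stdGaussPDF y) := fun y => by
    have := hP0 y
    field_simp
  simp only [hcancel] at hder hint'
  have hparts := integral_mul_deriv_eq_deriv_mul_of_integrable
    (u := fun y => G (X y z)) (u' := fun y => deriv G (X y z) * deriv (fun y' => X y' z) y)
    (fun y _ => (hG _).hasDerivAt.comp y (hXyd y z)) (fun y _ => (hv y).hasDerivAt)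
    (hint hw) hint' (hint hvi)
  rwa [hparts, neg_neg]

/-- integration-by-parts identity underlying Proposition 3.7: for a bounded
measurable `g` and a `C²` function `X(y,z)` with `∂_y X ≥ ε > 0` and polynomially bounded
derivatives `∂_z X`, `∂²_{yz} X`, `∂²_{yy} X`, the function
`h(z) = ∫ g(X(y,z)) φ(y) dy` is differentiable with
`h'(z) = -∫ g(X(y,z)) ∂/∂y [ (∂_z X / ∂_y X)(y,z) φ(y) ] dy`. -/
theorem smoothing_by_parts (g : ℝ → ℝ) (hg : Measurable g)
    (Cg : ℝ) (hgb : ∀ x, |g x| ≤ Cg)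
    (X : ℝ → ℝ → ℝ) (hX : ContDiff ℝ 2 fun q : ℝ × ℝ => X q.1 q.2)
    (ε : ℝ) (hε : 0 < ε) (hXy : ∀ y z, ε ≤ deriv (fun y' => X y' z) y)
    (C : ℝ) (hC : 0 ≤ C) (m : ℕ)
    (hz : ∀ y z, |deriv (fun z' => X y z') z| ≤ C * (1 + |y|) ^ m)
    (hyz : ∀ y z, |deriv (fun y' => deriv (fun z' => X y' z') z) y| ≤ C * (1 + |y|) ^ m)
    (hyy : ∀ y z, |deriv (fun y' => deriv (fun y'' => X y'' z) y') y| ≤ C * (1 + |y|) ^ m) :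
    Differentiable ℝ (fun z => ∫ y : ℝ, g (X y z) * stdGaussPDF y) ∧
    ∀ z, deriv (fun z' => ∫ y : ℝ, g (X y z') * stdGaussPDF y) z =
      -∫ y : ℝ, g (X y z) *
        deriv (fun y' =>
          (deriv (fun z' => X y' z') z / deriv (fun y'' => X y'' z) y') * stdGaussPDF y') y := by
  have hPi : ∀ z : ℝ, ContDiff ℝ 1 fun y : ℝ => (y, z) := contDiff_prodMk_left
  have hPd : ∀ z, Differentiable ℝ fun y => deriv (fun y' => X y' z) y := fun z =>
    ((contDiff_deriv_fst hX).comp (hPi z)).differentiable one_ne_zero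
  have hQd : ∀ z, Differentiable ℝ fun y => deriv (fun z' => X y z') z := fun z =>
    ((contDiff_deriv_snd hX).comp (hPi z)).differentiable one_ne_zero
  have hXyd : ∀ y z, HasDerivAt (fun y' => X y' z) (deriv (fun y' => X y' z) y) y := fun y z =>
    ((hX.differentiable two_ne_zero).comp ((hPi z).differentiable one_ne_zero) y).hasDerivAt
  have hXm : ∀ z, Measurable fun y => X y z := fun z =>
    (hX.continuous.comp (hPi z).continuous).measurable
  set w : ℝ → ℝ → ℝ := fun z y => deriv (fun y' =>
    (deriv (fun z' => X y' z') z / deriv (fun y'' => X y'' z) y') * stdGaussPDF y') y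
  set B : ℝ → ℝ := fun y =>
    (2 * C / ε + C ^ 2 / ε ^ 2) * ((1 + |y|) ^ (2 * m + 1) * stdGaussPDF y)
  have hBi : Integrable B := (integrable_one_add_abs_pow_mul_stdGaussPDF _).const_mul _
  have hBc : Continuous B := by
    have := continuous_stdGaussPDF
    fun_prop
  have hwB : ∀ z y, |w z y| ≤ B y := fun z y =>
    abs_deriv_div_mul_stdGaussPDF_le (hPd z) (hQd z) hε (hXy · z) hC (hz · z) (hyz · z) (hyy · z) y
  have hwi : ∀ z, Integrable (w z) := fun z =>
    hBi.mono' (measurable_deriv _).aestronglyMeasurable (ae_of_all _ (hwB z))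
  have hφ : Integrable stdGaussPDF := by
    simpa using integrable_one_add_abs_pow_mul_stdGaussPDF 0
  obtain ⟨G, hGd, hGc, hGD, hGlim⟩ := exists_differentiable_tendsto_ae hg hgb
  have hbdd : ∀ {f : ℝ → ℝ}, Measurable f → (∀ x, |f x| ≤ Cg) → ∀ z {u : ℝ → ℝ}, Integrable u →
      Integrable fun y => f (X y z) * u y := fun hf hfb z _ hu =>
    hu.bdd_mul (hf.comp (hXm z)).aestronglyMeasurable (ae_of_all _ fun y => hfb _)
  have hunif : ∀ {u : ℝ → ℝ → ℝ} {b : ℝ → ℝ}, Continuous b → Integrable b →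
      (∀ z y, |u z y| ≤ b y) → (∀ z, Integrable (u z)) → TendstoLocallyUniformly
        (fun n z => ∫ y, G n (X y z) * u z y) (fun z => ∫ y, g (X y z) * u z y) atTop := by
    intro u b hbc hbi hub hui
    rw [tendstoLocallyUniformly_iff_forall_isCompact]
    intro K hK
    rw [Metric.tendstoUniformlyOn_iff]
    intro δ hδ
    have hsmall := eventually_integral_abs_comp_mul_lt (f := fun n x => g x - G n x)
      (fun n => hg.sub (hGd n).continuous.measurable)
      (fun n x => (abs_sub _ _).trans (add_le_add (hgb x) (hGc n x)))
      (hGlim.mono fun x hx => by simpa using hx.const_sub (g x))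
      hX.continuous hXyd hε hXy hbc hbi (fun y => (abs_nonneg _).trans (hub 0 y)) hK hδ
    filter_upwards [hsmall] with n hn z hzK
    refine lt_of_le_of_lt ?_ (hn z hzK)
    rw [Real.dist_eq, ← integral_sub (hbdd hg hgb z (hui z))
      (hbdd (hGd n).continuous.measurable (hGc n) z (hui z)), ← Real.norm_eq_abs]
    have hdiff : Measurable fun x => |g x - G n x| :=
      (hg.sub (hGd n).continuous.measurable).abs
    refine norm_integral_le_of_norm_le (hbi.bdd_mul (c := Cg + Cg)
      (hdiff.comp (hXm z)).aestronglyMeasurable (ae_of_all _ fun y => ?_)) (ae_of_all _ fun y => ?_)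
    · simpa using (abs_sub _ _).trans (add_le_add (hgb (X y z)) (hGc n (X y z)))
    · rw [← sub_mul, norm_mul]
      exact mul_le_mul_of_nonneg_left (hub z y) (abs_nonneg _)
  have hφunif := hunif (u := fun _ => stdGaussPDF) continuous_stdGaussPDF hφ
    (fun _ y => (abs_of_nonneg (stdGaussPDF_nonneg y)).le) fun _ => hφ
  have hderiv : ∀ z, HasDerivAt (fun z => ∫ y : ℝ, g (X y z) * stdGaussPDF y)
      (-∫ y : ℝ, g (X y z) * w z y) z := by
    intro z
    refine hasDerivAt_of_tendstoLocallyUniformlyOn isOpen_univ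
      (g' := fun z => -∫ y, g (X y z) * w z y) (f' := fun n z => -∫ y, G n (X y z) * w z y)
      (tendstoLocallyUniformlyOn_univ.2 (hunif hBc hBi hwB hwi).neg)
      (Eventually.of_forall fun n z _ => ?_)
      (fun z hz => (hφunif.tendstoLocallyUniformlyOn (s := univ)).tendsto_at hz) (mem_univ z)
    obtain ⟨D, hD⟩ := hGD n
    exact hasDerivAt_integral_comp_mul_stdGaussPDF (hGd n) (hGc n) hD hX hε hXy hz z (hwi z)
  exact ⟨fun z => (hderiv z).differentiableAt, fun z => (hderiv z).deriv⟩
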